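/- arXiv:math/9912122 — 2 statements merged into one kernel-verified Lean document; each statement's English description precedes it below -/
import Mathlib

section
/- Let Ω ⊂ ℂⁿ be a bounded convex open set whose boundary contains no nontrivial affine analytic disc, i.e., there are no a ∈ ℂⁿ and b ∈ ℂⁿ \ {0} with {a + ζb : ζ ∈ ℂ, |ζ| < 1} ⊆ ∂Ω. Then ∂Ω satisfies property (P₁): for every M > 0 there exist an open neighborhood U of ∂Ω and a C^∞ function λ : U → ℝ with 0 ≤ λ ≤ 1 such that ∑_{j,k=1}^n (∂²λ/∂z_j∂z̄_k)(z) w_j conj(w_k) ≥ M·|w|² for every z ∈ U and every w ∈ ℂⁿ. (This is the implication (2) ⇒ (3) of Theorem 11 for convex domains and q = 1, using that for convex boundaries the absence of analytic varieties is equivalent to the absence of affine ones.) -/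
noncomputable section

/-- The Wirtinger derivative `∂φ/∂z̄ⱼ = (1/2)(∂φ/∂xⱼ + i ∂φ/∂yⱼ)`. -/
def dzbar {n : ℕ} (φ : (Fin n → ℂ) → ℂ) (j : Fin n) (z : Fin n → ℂ) : ℂ :=
  (1 / 2) * (fderiv ℝ φ z (Pi.single j 1) + Complex.I * fderiv ℝ φ z (Pi.single j Complex.I))

/-- The Wirtinger derivative `∂φ/∂zⱼ = (1/2)(∂φ/∂xⱼ − i ∂φ/∂yⱼ)`. -/
def dz {n : ℕ} (φ : (Fin n → ℂ) → ℂ) (j : Fin n) (z : Fin n → ℂ) : ℂ :=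
  (1 / 2) * (fderiv ℝ φ z (Pi.single j 1) - Complex.I * fderiv ℝ φ z (Pi.single j Complex.I))

/-!
At a boundary point `p`, take a complex linear `L` whose real part supports `Ω` at `p`. The face
`{Re L = Re L(p)}` of `closure Ω` is convex and lies in `∂Ω`, so it contains no affine disc; hence
its real linear span is totally real, and there is a complex quadratic form `Q` with `Re Q < 0` on
that span away from `0`. For `T` and then `T'` large, `|z - p|² + Re (T Q(z - p) + T' L(z - p))`
vanishes at `p`, is less than `ε` on `∂Ω`, and has Levi form `|w|²`, because real parts of
holomorphic functions have vanishing Levi form. Finitely many of these functions have maximum in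
`(-ε, ε)` on the compact set `∂Ω`. The log-sum-exp regularization of the maximum is smooth, costs
at most another `ε`, and does not decrease the Levi form, by the Cauchy–Schwarz inequality.
Rescaling by `M = 1 / (3 ε)` gives `λ`.
-/

open Complex Filter Topology
open scoped ContDiff ComplexConjugate

section SndDirDeriv

variable {E : Type*} [NormedAddCommGroup E] [NormedSpace ℝ E]

/-- The second directional derivative `D²φ(z)(v, v)`, meaningful where `φ` is `C²`. -/
def sndDirDeriv (φ : E → ℝ) (z v : E) : ℝ :=
  fderiv ℝ (fderiv ℝ φ) z v v

variable {φ ψ : E → ℝ} {z : E}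

theorem eventually_differentiableAt_of_contDiffAt_two (hφ : ContDiffAt ℝ 2 φ z) :
    ∀ᶠ x in 𝓝 z, DifferentiableAt ℝ φ x :=
  (hφ.eventually (by simp)).mono fun _ hx => hx.differentiableAt (by norm_num)

theorem differentiableAt_fderiv_of_contDiffAt_two (hφ : ContDiffAt ℝ 2 φ z) :
    DifferentiableAt ℝ (fderiv ℝ φ) z :=
  (hφ.fderiv_right (m := 1) (by norm_num)).differentiableAt (by norm_num)

theorem sndDirDeriv_add (hφ : ContDiffAt ℝ 2 φ z) (hψ : ContDiffAt ℝ 2 ψ z) (v : E) :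
    sndDirDeriv (fun x => φ x + ψ x) z v = sndDirDeriv φ z v + sndDirDeriv ψ z v := by
  have hfst : fderiv ℝ (fun x => φ x + ψ x) =ᶠ[𝓝 z] fun x => fderiv ℝ φ x + fderiv ℝ ψ x := by
    filter_upwards [eventually_differentiableAt_of_contDiffAt_two hφ,
      eventually_differentiableAt_of_contDiffAt_two hψ] with x hφx hψx
    exact fderiv_fun_add hφx hψx
  rw [sndDirDeriv, hfst.fderiv_eq, fderiv_fun_add (differentiableAt_fderiv_of_contDiffAt_two hφ)
    (differentiableAt_fderiv_of_contDiffAt_two hψ)]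
  rfl

theorem sndDirDeriv_sum {ι : Type*} {t : Finset ι} {u : ι → E → ℝ}
    (hu : ∀ i ∈ t, ContDiffAt ℝ 2 (u i) z) (v : E) :
    sndDirDeriv (fun x => ∑ i ∈ t, u i x) z v = ∑ i ∈ t, sndDirDeriv (u i) z v := by
  have hfst : fderiv ℝ (fun x => ∑ i ∈ t, u i x) =ᶠ[𝓝 z] fun x => ∑ i ∈ t, fderiv ℝ (u i) x := by
    filter_upwards [(Finset.eventually_all t).2 fun i hi =>
      eventually_differentiableAt_of_contDiffAt_two (hu i hi)] with x hx
    exact fderiv_fun_sum hx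
  rw [sndDirDeriv, hfst.fderiv_eq,
    fderiv_fun_sum fun i hi => differentiableAt_fderiv_of_contDiffAt_two (hu i hi)]
  simp only [sum_apply, sndDirDeriv]

theorem sndDirDeriv_comp {f f' : ℝ → ℝ} {f'' : ℝ} (hφ : ContDiffAt ℝ 2 φ z)
    (hf : ∀ᶠ y in 𝓝 (φ z), HasDerivAt f (f' y) y) (hf' : HasDerivAt f' f'' (φ z)) (v : E) :
    sndDirDeriv (fun x => f (φ x)) z v =
      f'' * fderiv ℝ φ z v ^ 2 + f' (φ z) * sndDirDeriv φ z v := by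
  have hfst : fderiv ℝ (fun x => f (φ x)) =ᶠ[𝓝 z] fun x => f' (φ x) • fderiv ℝ φ x := by
    filter_upwards [eventually_differentiableAt_of_contDiffAt_two hφ,
      hφ.continuousAt.eventually hf] with x hφx hfx
    exact (hfx.comp_hasFDerivAt x hφx.hasFDerivAt).fderiv
  have hφ_fderiv : HasFDerivAt φ (fderiv ℝ φ z) z :=
    (hφ.differentiableAt (by norm_num)).hasFDerivAt
  have hf'φ : HasFDerivAt (fun x => f' (φ x)) (f'' • fderiv ℝ φ z) z :=
    hf'.comp_hasFDerivAt z hφ_fderiv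
  rw [sndDirDeriv, hfst.fderiv_eq,
    (hf'φ.fun_smul (differentiableAt_fderiv_of_contDiffAt_two hφ).hasFDerivAt).fderiv]
  simp only [add_apply, smul_apply, ContinuousLinearMap.smulRight_apply, smul_eq_mul, sndDirDeriv]
  ring

theorem sndDirDeriv_norm_sub_sq {F : Type*} [NormedAddCommGroup F] [InnerProductSpace ℝ F]
    (A : E →L[ℝ] F) (c : F) (z v : E) :
    sndDirDeriv (fun x => ‖A x - c‖ ^ 2) z v = 2 * ‖A v‖ ^ 2 := by
  have hfst (x : E) :
      HasFDerivAt (fun x => ‖A x - c‖ ^ 2) (2 • (innerSL ℝ (A x - c)).comp A) x :=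
    (A.hasFDerivAt.sub_const c).norm_sq
  have hsnd : HasFDerivAt (fun x => 2 • (innerSL ℝ (A x - c)).comp A)
      (2 • ((ContinuousLinearMap.compL ℝ E F ℝ).flip A).comp ((innerSL ℝ).comp A)) z :=
    (((ContinuousLinearMap.compL ℝ E F ℝ).flip A).hasFDerivAt.comp z
      ((innerSL ℝ).hasFDerivAt.comp z (A.hasFDerivAt.sub_const c))).const_smul (2 : ℕ)
  rw [sndDirDeriv, funext fun x => (hfst x).fderiv, hsnd.fderiv]
  simp

end SndDirDeriv

section SoftMax

variable {X ι : Type*}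

/-- The log-sum-exp regularization of the maximum of the functions `u i`, `i ∈ t`; it tends to the
maximum as `N → ∞`. For `t = ∅` it is the junk value `0`. -/
def softMax (N : ℝ) (t : Finset ι) (u : ι → X → ℝ) (x : X) : ℝ :=
  Real.log (∑ i ∈ t, Real.exp (N * u i x)) / N

variable {N : ℝ} {t : Finset ι} {u : ι → X → ℝ} {x : X}

theorem le_softMax (hN : 0 < N) {i : ι} (hi : i ∈ t) : u i x ≤ softMax N t u x := by
  rw [softMax, le_div_iff₀ hN, mul_comm,
    Real.le_log_iff_exp_le (Finset.sum_pos (fun _ _ => Real.exp_pos _) ⟨i, hi⟩)]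
  exact Finset.single_le_sum (f := fun i => Real.exp (N * u i x)) (fun _ _ => by positivity) hi

theorem softMax_le (hN : 0 < N) (ht : t.Nonempty) {c : ℝ} (hc : ∀ i ∈ t, u i x ≤ c) :
    softMax N t u x ≤ c + Real.log t.card / N := by
  have hcard : (t.card : ℝ) ≠ 0 := by exact_mod_cast ht.card_ne_zero
  have hsum : ∑ i ∈ t, Real.exp (N * u i x) ≤ t.card * Real.exp (N * c) := by
    rw [← nsmul_eq_mul]
    exact Finset.sum_le_card_nsmul _ _ _ fun i hi =>
      Real.exp_le_exp.2 (mul_le_mul_of_nonneg_left (hc i hi) hN.le)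
  calc softMax N t u x
      ≤ Real.log (t.card * Real.exp (N * c)) / N := by
        unfold softMax
        gcongr
    _ = c + Real.log t.card / N := by
        rw [Real.log_mul hcard (Real.exp_ne_zero _), Real.log_exp]
        field_simp
        ring

theorem exists_softMax_mem_Ioo [TopologicalSpace X] {K : Set X} (hK : IsCompact K)
    (hK_ne : K.Nonempty) {u : X → X → ℝ} (hu : ∀ p ∈ K, Continuous (u p)) {ε : ℝ} (hε : 0 < ε)
    (hu_self : ∀ p ∈ K, 0 ≤ u p p) (hu_lt : ∀ p ∈ K, ∀ z ∈ K, u p z < ε) :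
    ∃ (t : Finset X) (N : ℝ), t.Nonempty ∧ (∀ p ∈ t, p ∈ K) ∧ 0 < N ∧
      ∀ z ∈ K, softMax N t u z ∈ Set.Ioo (-ε) (2 * ε) := by
  obtain ⟨t, htK, hcover⟩ := hK.elim_nhds_subcover (fun p => {z | -ε < u p z}) fun p hp =>
    (isOpen_lt continuous_const (hu p hp)).mem_nhds ((neg_neg_of_pos hε).trans_le (hu_self p hp))
  have hcover' : ∀ z ∈ K, ∃ p ∈ t, -ε < u p z := fun z hz => by simpa using hcover hz
  have ht : t.Nonempty := by
    obtain ⟨z, hz⟩ := hK_ne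
    obtain ⟨p, hp, -⟩ := hcover' z hz
    exact ⟨p, hp⟩
  set N : ℝ := (Real.log t.card + 1) / ε with hN_def
  have hN : 0 < N := by positivity
  have hlogN : Real.log t.card / N < ε := by
    rw [div_lt_iff₀ hN, hN_def, mul_div_cancel₀ _ hε.ne']
    linarith
  refine ⟨t, N, ht, htK, hN, fun z hz => ⟨?_, ?_⟩⟩
  · obtain ⟨p, hp, hpz⟩ := hcover' z hz
    exact hpz.trans_le (le_softMax hN hp)
  · have := softMax_le hN ht fun p hp => (hu_lt p (htK p hp) z hz).le
    linarith

end SoftMax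

section SoftMaxDeriv

variable {E ι : Type*} [NormedAddCommGroup E] [NormedSpace ℝ E]
  {N : ℝ} {t : Finset ι} {u : ι → E → ℝ} {z : E}

theorem contDiff_softMax {m : ℕ∞ω} (ht : t.Nonempty) (hu : ∀ i ∈ t, ContDiff ℝ m (u i)) :
    ContDiff ℝ m (softMax N t u) := by
  have hsum : ContDiff ℝ m fun x => ∑ i ∈ t, Real.exp (N * u i x) :=
    ContDiff.sum fun i hi => (contDiff_const.mul (hu i hi)).exp
  exact (hsum.log fun x => (Finset.sum_pos (fun _ _ => Real.exp_pos _) ht).ne').div_const N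

theorem fderiv_sum_exp (hu : ∀ i ∈ t, DifferentiableAt ℝ (u i) z) (v : E) :
    fderiv ℝ (fun x => ∑ i ∈ t, Real.exp (N * u i x)) z v =
      N * ∑ i ∈ t, Real.exp (N * u i z) * fderiv ℝ (u i) z v := by
  have hexp : ∀ i ∈ t, HasFDerivAt (fun x => Real.exp (N * u i x))
      (Real.exp (N * u i z) • N • fderiv ℝ (u i) z) z := fun i hi =>
    ((hu i hi).hasFDerivAt.const_mul N).exp
  rw [(HasFDerivAt.fun_sum hexp).fderiv]
  simp only [sum_apply, smul_apply, smul_eq_mul, Finset.mul_sum]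
  exact Finset.sum_congr rfl fun _ _ => by ring

theorem sndDirDeriv_sum_exp (hu : ∀ i ∈ t, ContDiffAt ℝ 2 (u i) z) (v : E) :
    sndDirDeriv (fun x => ∑ i ∈ t, Real.exp (N * u i x)) z v =
      N ^ 2 * ∑ i ∈ t, Real.exp (N * u i z) * fderiv ℝ (u i) z v ^ 2 +
        N * ∑ i ∈ t, Real.exp (N * u i z) * sndDirDeriv (u i) z v := by
  have hexp (y : ℝ) : HasDerivAt (fun y => Real.exp (N * y)) (Real.exp (N * y) * N) y := by
    simpa using ((hasDerivAt_id y).const_mul N).exp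
  rw [sndDirDeriv_sum fun i hi => (contDiffAt_const.mul (hu i hi)).exp, Finset.mul_sum,
    Finset.mul_sum, ← Finset.sum_add_distrib]
  refine Finset.sum_congr rfl fun i hi => ?_
  rw [sndDirDeriv_comp (hu i hi) (.of_forall hexp) ((hexp _).mul_const N)]
  ring

theorem sum_exp_mul_sndDirDeriv_le_sndDirDeriv_softMax (hN : 0 < N) (ht : t.Nonempty)
    (hu : ∀ i ∈ t, ContDiffAt ℝ 2 (u i) z) (v : E) :
    (∑ i ∈ t, Real.exp (N * u i z) * sndDirDeriv (u i) z v) / ∑ i ∈ t, Real.exp (N * u i z) ≤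
      sndDirDeriv (softMax N t u) z v := by
  have hG_smooth : ContDiffAt ℝ 2 (fun x => ∑ i ∈ t, Real.exp (N * u i x)) z :=
    ContDiffAt.sum fun i hi => (contDiffAt_const.mul (hu i hi)).exp
  have hG : 0 < ∑ i ∈ t, Real.exp (N * u i z) := Finset.sum_pos (fun _ _ => Real.exp_pos _) ht
  have hlog : ∀ᶠ y in 𝓝 (∑ i ∈ t, Real.exp (N * u i z)),
      HasDerivAt (fun y => Real.log y / N) (y⁻¹ / N) y :=
    (eventually_ne_nhds hG.ne').mono fun y hy => (Real.hasDerivAt_log hy).div_const N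
  have hcauchy : (∑ i ∈ t, Real.exp (N * u i z) * fderiv ℝ (u i) z v) ^ 2 ≤
      (∑ i ∈ t, Real.exp (N * u i z)) *
        ∑ i ∈ t, Real.exp (N * u i z) * fderiv ℝ (u i) z v ^ 2 :=
    Finset.sum_sq_le_sum_mul_sum_of_sq_le_mul t (fun _ _ => by positivity)
      (fun _ _ => by positivity) fun _ _ => le_of_eq (by ring)
  have hsnd : sndDirDeriv (softMax N t u) z v = _ :=
    sndDirDeriv_comp hG_smooth hlog ((hasDerivAt_inv hG.ne').div_const N) v
  rw [hsnd, fderiv_sum_exp fun i hi => (hu i hi).differentiableAt (by norm_num),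
    sndDirDeriv_sum_exp hu]
  set G := ∑ i ∈ t, Real.exp (N * u i z)
  set D := ∑ i ∈ t, Real.exp (N * u i z) * fderiv ℝ (u i) z v
  set V := ∑ i ∈ t, Real.exp (N * u i z) * fderiv ℝ (u i) z v ^ 2
  set S := ∑ i ∈ t, Real.exp (N * u i z) * sndDirDeriv (u i) z v
  calc S / G ≤ S / G + N * (G * V - D ^ 2) / G ^ 2 :=
        le_add_of_nonneg_right (by have := sub_nonneg.2 hcauchy; positivity)
    _ = -(G ^ 2)⁻¹ / N * (N * D) ^ 2 + G⁻¹ / N * (N ^ 2 * V + N * S) := by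
        field_simp
        ring

end SoftMaxDeriv

section ComplexSMul

variable {E : Type*} [AddCommGroup E] [Module ℂ E] [Module ℝ E] [IsScalarTower ℝ ℂ E]

theorem complex_smul_eq_re_smul_add_im_smul (c : ℂ) (v : E) :
    c • v = c.re • v + c.im • I • v := by
  conv_lhs => rw [← re_add_im c, add_smul, mul_smul]
  rw [← algebraMap_smul ℂ c.re, ← algebraMap_smul ℂ c.im, coe_algebraMap]

end ComplexSMul

section LeviForm

variable {E : Type*} [NormedAddCommGroup E] [NormedSpace ℂ E] [NormedSpace ℝ E]

/-- The Levi form (complex Hessian) of `φ` at `z` on the diagonal, which for a real-valued `C²`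
function equals `∑ ∂²φ/∂z_j∂z̄_k w_j w̄_k`; written coordinate-free through real derivatives. -/
def leviForm (φ : E → ℝ) (z w : E) : ℝ :=
  (sndDirDeriv φ z w + sndDirDeriv φ z (I • w)) / 4

theorem le_leviForm_softMax {ι : Type*} {N : ℝ} {t : Finset ι} {u : ι → E → ℝ} {z w : E} {c : ℝ}
    (hN : 0 < N) (ht : t.Nonempty) (hu : ∀ i ∈ t, ContDiffAt ℝ 2 (u i) z)
    (hc : ∀ i ∈ t, c ≤ leviForm (u i) z w) : c ≤ leviForm (softMax N t u) z w := by
  have hG : 0 < ∑ i ∈ t, Real.exp (N * u i z) := Finset.sum_pos (fun _ _ => Real.exp_pos _) ht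
  calc c ≤ (∑ i ∈ t, Real.exp (N * u i z) * leviForm (u i) z w) /
          ∑ i ∈ t, Real.exp (N * u i z) := by
        rw [le_div_iff₀ hG, Finset.mul_sum]
        refine Finset.sum_le_sum fun i hi => ?_
        rw [mul_comm]
        exact mul_le_mul_of_nonneg_left (hc i hi) (Real.exp_nonneg _)
    _ = ((∑ i ∈ t, Real.exp (N * u i z) * sndDirDeriv (u i) z w) /
            (∑ i ∈ t, Real.exp (N * u i z)) +
          (∑ i ∈ t, Real.exp (N * u i z) * sndDirDeriv (u i) z (I • w)) /
            ∑ i ∈ t, Real.exp (N * u i z)) / 4 := by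
        rw [← add_div, ← Finset.sum_add_distrib, div_right_comm, Finset.sum_div t _ (4 : ℝ)]
        simp only [leviForm, ← mul_add, mul_div_assoc]
    _ ≤ leviForm (softMax N t u) z w := by
        unfold leviForm
        gcongr <;> exact sum_exp_mul_sndDirDeriv_le_sndDirDeriv_softMax hN ht hu _

theorem leviForm_add {φ ψ : E → ℝ} {z : E} (hφ : ContDiffAt ℝ 2 φ z) (hψ : ContDiffAt ℝ 2 ψ z)
    (w : E) : leviForm (fun x => φ x + ψ x) z w = leviForm φ z w + leviForm ψ z w := by
  simp only [leviForm, sndDirDeriv_add hφ hψ]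
  ring

theorem leviForm_const_mul_const_add {φ : E → ℝ} {z : E} (hφ : ContDiffAt ℝ 2 φ z) (a b : ℝ)
    (w : E) : leviForm (fun x => a * (b + φ x)) z w = a * leviForm φ z w := by
  have hf (y : ℝ) : HasDerivAt (fun y => a * (b + y)) a y := by
    simpa using ((hasDerivAt_id y).const_add b).const_mul a
  simp only [leviForm,
    sndDirDeriv_comp hφ (.of_forall hf) (hasDerivAt_const (φ z) a)]
  ring

variable [IsScalarTower ℝ ℂ E]

theorem sndDirDeriv_re {h : E → ℂ} (hh : ContDiff ℂ 2 h) (z v : E) :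
    sndDirDeriv (fun x => (h x).re) z v = (fderiv ℂ (fderiv ℂ h) z v v).re := by
  have hfst (x : E) : fderiv ℝ (fun x => (h x).re) x =
      reCLM.comp ((fderiv ℂ h x).restrictScalars ℝ) :=
    (reCLM.hasFDerivAt.comp x
      ((hh.differentiable (by norm_num) x).hasFDerivAt.restrictScalars ℝ)).fderiv
  have hdiff : DifferentiableAt ℂ (fderiv ℂ h) z :=
    (hh.fderiv_right (m := 1) (by norm_num)).differentiable (by norm_num) z
  have hsnd : HasFDerivAt (fun x => reCLM.comp ((fderiv ℂ h x).restrictScalars ℝ))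
      ((ContinuousLinearMap.compL ℝ E ℂ ℝ reCLM).comp
        ((ContinuousLinearMap.restrictScalarsL ℂ E ℂ ℝ ℝ).comp
          ((fderiv ℂ (fderiv ℂ h) z).restrictScalars ℝ))) z :=
    (ContinuousLinearMap.compL ℝ E ℂ ℝ reCLM).hasFDerivAt.comp z
      ((ContinuousLinearMap.restrictScalarsL ℂ E ℂ ℝ ℝ).hasFDerivAt.comp z
        (hdiff.hasFDerivAt.restrictScalars ℝ))
  rw [sndDirDeriv, funext hfst, hsnd.fderiv]
  rfl

theorem leviForm_re {h : E → ℂ} (hh : ContDiff ℂ 2 h) (z w : E) :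
    leviForm (fun x => (h x).re) z w = 0 := by
  simp [leviForm, sndDirDeriv_re hh, ← mul_assoc]

theorem contDiff_norm_apply_sub_sq {ι : Type*} [Fintype ι] {m : ℕ∞ω} (p : ι → ℂ) (j : ι) :
    ContDiff ℝ m fun x : ι → ℂ => ‖x j - p j‖ ^ 2 :=
  ((contDiff_apply ℝ ℂ j).sub contDiff_const).norm_sq ℝ

theorem leviForm_sum_norm_sub_sq {ι : Type*} [Fintype ι] (p z w : ι → ℂ) :
    leviForm (fun x => ∑ j, ‖x j - p j‖ ^ 2) z w = ∑ j, ‖w j‖ ^ 2 := by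
  have hsnd (v : ι → ℂ) :
      sndDirDeriv (fun x => ∑ j, ‖x j - p j‖ ^ 2) z v = 2 * ∑ j, ‖v j‖ ^ 2 := by
    rw [sndDirDeriv_sum fun j _ => (contDiff_norm_apply_sub_sq p j).contDiffAt, Finset.mul_sum]
    exact Finset.sum_congr rfl fun j _ =>
      sndDirDeriv_norm_sub_sq (ContinuousLinearMap.proj (R := ℝ) (φ := fun _ : ι => ℂ) j)
        (p j) z v
  simp only [leviForm, hsnd, Pi.smul_apply, norm_smul, norm_I, one_mul]
  ring

/-- The sesquilinear form on a complex space obtained from a real bilinear form `B` by averaging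
over multiplication by `I`. For `B` the real Hessian this is the complex Hessian. -/
def sesqOfRealBilin (B : E →L[ℝ] E →L[ℝ] ℝ) : E →ₗ[ℂ] E →ₗ⋆[ℂ] ℂ :=
  LinearMap.mk₂'ₛₗ (RingHom.id ℂ) (starRingEnd ℂ)
    (fun v w => ⟨(B v w + B (I • v) (I • w)) / 4, (B v (I • w) - B (I • v) w) / 4⟩)
    (fun v v' w => by apply Complex.ext <;> simp <;> ring)
    (fun c v w => by
      rw [smul_comm I c v, complex_smul_eq_re_smul_add_im_smul c v,
        complex_smul_eq_re_smul_add_im_smul c (I • v), smul_smul I I]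
      apply Complex.ext <;> simp <;> ring)
    (fun v w w' => by apply Complex.ext <;> simp <;> ring)
    (fun c v w => by
      rw [smul_comm I c w, complex_smul_eq_re_smul_add_im_smul c w,
        complex_smul_eq_re_smul_add_im_smul c (I • w), smul_smul I I]
      apply Complex.ext <;> simp <;> ring)

theorem sesqOfRealBilin_fderiv_fderiv_self {φ : E → ℝ} {z : E} (hφ : ContDiffAt ℝ 2 φ z) (w : E) :
    sesqOfRealBilin (fderiv ℝ (fderiv ℝ φ) z) w w = leviForm φ z w := by
  have hsymm := hφ.isSymmSndFDerivAt (by simp) w (I • w)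
  apply Complex.ext <;> simp [sesqOfRealBilin, leviForm, sndDirDeriv, hsymm]

end LeviForm

section Wirtinger

variable {n : ℕ} {φ : (Fin n → ℂ) → ℝ} {z : Fin n → ℂ}

theorem dz_dzbar_ofReal (hφ : ContDiffAt ℝ 2 φ z) (j k : Fin n) :
    dz (dzbar (fun ζ => (φ ζ : ℂ)) k) j z =
      sesqOfRealBilin (fderiv ℝ (fderiv ℝ φ) z) (Pi.single j 1) (Pi.single k 1) := by
  have hsingle (i : Fin n) : (Pi.single i I : Fin n → ℂ) = I • Pi.single i 1 := by
    rw [← Pi.single_smul, smul_eq_mul, mul_one]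
  have hdzbar : dzbar (fun ζ => (φ ζ : ℂ)) k =ᶠ[𝓝 z] fun x => (1 / 2) *
      ((fderiv ℝ φ x (Pi.single k 1) : ℂ) + I * (fderiv ℝ φ x (I • Pi.single k 1) : ℂ)) := by
    filter_upwards [eventually_differentiableAt_of_contDiffAt_two hφ] with x hx
    have hcomp : HasFDerivAt (fun ζ => (φ ζ : ℂ)) (ofRealCLM.comp (fderiv ℝ φ x)) x :=
      ofRealCLM.hasFDerivAt.comp x hx.hasFDerivAt
    rw [dzbar, hcomp.fderiv, hsingle]
    rfl
  have hsnd (v : Fin n → ℂ) : HasFDerivAt (fun x => (fderiv ℝ φ x v : ℂ))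
      (ofRealCLM.comp ((fderiv ℝ (fderiv ℝ φ) z).flip v)) z :=
    ofRealCLM.hasFDerivAt.comp z
      (((differentiableAt_fderiv_of_contDiffAt_two hφ).hasFDerivAt.clm_apply
        (hasFDerivAt_const v z)).congr_fderiv (by simp))
  rw [dz, hdzbar.fderiv_eq,
    (((hsnd _).fun_add ((hsnd _).const_mul I)).const_mul (1 / 2)).fderiv, hsingle]
  apply Complex.ext <;> simp [sesqOfRealBilin] <;> ring

theorem sum_dz_dzbar_ofReal (hφ : ContDiffAt ℝ 2 φ z) (w : Fin n → ℂ) :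
    ∑ j, ∑ k, dz (dzbar (fun ζ => (φ ζ : ℂ)) k) j z * w j * conj (w k) = leviForm φ z w := by
  rw [← sesqOfRealBilin_fderiv_fderiv_self hφ,
    ← LinearMap.sum_repr_mul_repr_mulₛₗ (Pi.basisFun ℂ (Fin n)) (Pi.basisFun ℂ (Fin n)) w w]
  simp [dz_dzbar_ofReal hφ, Finsupp.sum_fintype, mul_comm, mul_left_comm]

end Wirtinger

section PropertyP

variable {n : ℕ} {K : Set (Fin n → ℂ)}

open scoped ComplexOrder in
/-- Catlin's property `(P₁)` of a set `K`: near `K` there are smooth functions with values in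
`[0, 1]` and arbitrarily large complex Hessian. The complex inequality also says that the Hessian
form is real. -/
def HasPropertyP₁ (K : Set (Fin n → ℂ)) : Prop :=
  ∀ M : ℝ, 0 < M →
    ∃ U : Set (Fin n → ℂ), IsOpen U ∧ K ⊆ U ∧
      ∃ lam : (Fin n → ℂ) → ℝ,
        ContDiffOn ℝ (⊤ : ℕ∞) (fun z => (lam z : ℂ)) U ∧
        (∀ z ∈ U, 0 ≤ lam z ∧ lam z ≤ 1) ∧
        ∀ z ∈ U, ∀ w : Fin n → ℂ,
          ((M * ∑ j, ‖w j‖ ^ 2 : ℝ) : ℂ) ≤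
            ∑ j : Fin n, ∑ k : Fin n,
              dz (dzbar (fun ζ => (lam ζ : ℂ)) k) j z * w j * (starRingEnd ℂ) (w k)

theorem hasPropertyP₁_of_contDiff
    (h : ∀ M : ℝ, 0 < M → ∃ lam : (Fin n → ℂ) → ℝ, ContDiff ℝ ∞ lam ∧
      (∀ z ∈ K, lam z ∈ Set.Ioo 0 1) ∧ ∀ z w, M * ∑ j, ‖w j‖ ^ 2 ≤ leviForm lam z w) :
    HasPropertyP₁ K := by
  intro M hM
  obtain ⟨lam, hlam, hlam_mem, hlevi⟩ := h M hM
  refine ⟨lam ⁻¹' Set.Ioo 0 1, isOpen_Ioo.preimage hlam.continuous, hlam_mem, lam,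
    (ofRealCLM.contDiff.comp hlam).contDiffOn, fun z hz => ⟨hz.1.le, hz.2.le⟩, fun z _ w => ?_⟩
  rw [sum_dz_dzbar_ofReal (contDiff_infty.1 hlam 2).contDiffAt, real_le_real]
  exact hlevi z w

theorem hasPropertyP₁_of_peak (hK : IsCompact K)
    (hpeak : ∀ p ∈ K, ∀ ε > 0, ∃ u : (Fin n → ℂ) → ℝ, ContDiff ℝ ∞ u ∧ 0 ≤ u p ∧
      (∀ z ∈ K, u z < ε) ∧ ∀ z w, ∑ j, ‖w j‖ ^ 2 ≤ leviForm u z w) :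
    HasPropertyP₁ K := by
  rcases K.eq_empty_or_nonempty with rfl | hK_ne
  · exact fun M _ => ⟨∅, isOpen_empty, subset_rfl, 0, by simp [contDiffOn_empty]⟩
  refine hasPropertyP₁_of_contDiff fun M hM => ?_
  set ε : ℝ := 1 / (3 * M) with hε_def
  have hε : 0 < ε := by positivity
  have hMε : M * (3 * ε) = 1 := by rw [hε_def]; field_simp
  choose! u hu_smooth hu_self hu_lt hu_levi using fun p hp => hpeak p hp ε hε
  obtain ⟨t, N, ht, htK, hN, hbounds⟩ := exists_softMax_mem_Ioo hK hK_ne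
    (fun p hp => (hu_smooth p hp).continuous) hε hu_self hu_lt
  have hu_two : ∀ p ∈ t, ContDiff ℝ 2 (u p) := fun p hp =>
    contDiff_infty.1 (hu_smooth p (htK p hp)) 2
  refine ⟨fun z => M * (ε + softMax N t u z), ?_, fun z hz => ⟨?_, ?_⟩, fun z w => ?_⟩
  · exact contDiff_const.mul
      (contDiff_const.add (contDiff_softMax ht fun p hp => hu_smooth p (htK p hp)))
  · exact mul_pos hM (by linarith [(hbounds z hz).1])
  · nlinarith [(hbounds z hz).2]
  · rw [leviForm_const_mul_const_add (contDiff_softMax ht hu_two).contDiffAt]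
    exact mul_le_mul_of_nonneg_left (le_leviForm_softMax hN ht
      (fun p hp => (hu_two p hp).contDiffAt) fun p hp => hu_levi p (htK p hp) z w) hM.le

end PropertyP

section TotallyReal

variable {E : Type*} [AddCommGroup E] [Module ℂ E] [Module ℝ E]

/-- A real subspace is totally real if it contains no complex line. -/
def IsTotallyReal (S : Submodule ℝ E) : Prop :=
  ∀ v ∈ S, I • v ∈ S → v = 0

namespace IsTotallyReal

variable [IsScalarTower ℝ ℂ E] {S : Submodule ℝ E} {ι : Type*}

theorem linearIndependent_coe (hS : IsTotallyReal S) {b : ι → S} (hb : LinearIndependent ℝ b) :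
    LinearIndependent ℂ (fun i => (b i : E)) := by
  rw [linearIndependent_iff'] at hb ⊢
  intro s c hc
  set x : S := ∑ i ∈ s, (c i).re • b i with hx
  set y : S := ∑ i ∈ s, (c i).im • b i with hy
  have hxy : (x : E) + I • (y : E) = 0 := by
    rw [← hc, hx, hy]
    simp only [complex_smul_eq_re_smul_add_im_smul (c _), Submodule.coe_sum, Submodule.coe_smul,
      Finset.smul_sum, Finset.sum_add_distrib, smul_comm I (_ : ℝ)]
  have hy_zero : y = 0 := by
    refine Subtype.ext (hS y y.2 ?_)
    rw [eq_neg_of_add_eq_zero_right hxy]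
    exact S.neg_mem x.2
  have hx_zero : x = 0 := Subtype.ext (by simpa [hy_zero] using hxy)
  exact fun i hi => Complex.ext (hb s _ hx_zero i hi) (hb s _ hy_zero i hi)

theorem exists_linearMap_eq_repr [Finite ι] (hS : IsTotallyReal S) (b : Module.Basis ι ℝ S) :
    ∃ g : E →ₗ[ℂ] ι → ℂ, ∀ (v : S) (i : ι), g v i = b.repr v i := by
  cases nonempty_fintype ι
  have hker : (Fintype.linearCombination ℂ fun i => (b i : E)).ker = ⊥ :=
    LinearMap.ker_eq_bot.2
      (hS.linearIndependent_coe b.linearIndependent).fintypeLinearCombination_injective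
  obtain ⟨g, hg⟩ := LinearMap.exists_leftInverse_of_injective _ hker
  refine ⟨g, fun v i => ?_⟩
  have hv : (v : E) =
      Fintype.linearCombination ℂ (fun i => (b i : E)) fun i => (b.repr v i : ℂ) := by
    have hsum := congrArg Subtype.val (b.sum_repr v)
    simpa [Fintype.linearCombination_apply,
      complex_smul_eq_re_smul_add_im_smul ((b.repr v _ : ℝ) : ℂ), -Module.Basis.sum_repr]
      using hsum.symm
  rw [hv]
  exact congrFun (LinearMap.congr_fun hg _) i

end IsTotallyReal

end TotallyReal

section AffineDisc

variable {E : Type*} [AddCommGroup E] [Module ℂ E]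

/-- `s` contains a nontrivial affine analytic disc. -/
def ContainsAffineDisc (s : Set E) : Prop :=
  ∃ a b : E, b ≠ 0 ∧ ∀ ζ : ℂ, ‖ζ‖ < 1 → a + ζ • b ∈ s

theorem ContainsAffineDisc.mono {s t : Set E} (hs : ContainsAffineDisc s) (hst : s ⊆ t) :
    ContainsAffineDisc t :=
  let ⟨a, b, hb, hab⟩ := hs
  ⟨a, b, hb, fun ζ hζ => hst (hab ζ hζ)⟩

end AffineDisc

section FiniteDimensional

variable {E : Type*} [NormedAddCommGroup E] [NormedSpace ℂ E] [NormedSpace ℝ E]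
  [IsScalarTower ℝ ℂ E] [FiniteDimensional ℂ E]

theorem isTotallyReal_vectorSpan {A : Set E} (hA : Convex ℝ A) (hdisc : ¬ ContainsAffineDisc A) :
    IsTotallyReal (vectorSpan ℝ A) := by
  have : FiniteDimensional ℝ E := .trans ℝ ℂ E
  intro b hb hIb
  by_contra hb0
  have hA_ne : A.Nonempty := by
    by_contra! hA_empty
    exact hb0 (by simpa [hA_empty] using hb)
  obtain ⟨_, ha⟩ := hA_ne.intrinsicInterior hA
  obtain ⟨a, ha_int, rfl⟩ := mem_intrinsicInterior.1 ha
  obtain ⟨r, hr, hball⟩ := Metric.mem_nhds_iff.1 (mem_interior_iff_mem_nhds.1 ha_int)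
  have hb_pos : 0 < ‖b‖ := norm_pos_iff.2 hb0
  refine hdisc ⟨a, ((r / ‖b‖ : ℝ) : ℂ) • b,
    smul_ne_zero (by exact_mod_cast (by positivity)) hb0, fun ζ hζ => ?_⟩
  have hmem : (a : E) + ζ • ((r / ‖b‖ : ℝ) : ℂ) • b ∈ affineSpan ℝ A := by
    rw [smul_smul, add_comm, complex_smul_eq_re_smul_add_im_smul]
    refine AffineSubspace.vadd_mem_of_mem_direction ?_ a.2
    rw [direction_affineSpan]
    exact add_mem (Submodule.smul_mem _ _ hb) (Submodule.smul_mem _ _ hIb)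
  refine @hball ⟨_, hmem⟩ ?_
  rw [Metric.mem_ball, Subtype.dist_eq, dist_self_add_left, norm_smul, norm_smul, norm_real,
    Real.norm_of_nonneg (by positivity), div_mul_cancel₀ _ hb_pos.ne']
  exact mul_lt_of_lt_one_left hr hζ

theorem IsTotallyReal.exists_contDiff_re_neg {S : Submodule ℝ E} (hS : IsTotallyReal S) :
    ∃ Q : E → ℂ, ContDiff ℂ ω Q ∧ Q 0 = 0 ∧ ∀ v ∈ S, v ≠ 0 → (Q v).re < 0 := by
  have : FiniteDimensional ℝ E := .trans ℝ ℂ E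
  let b := Module.finBasis ℝ S
  obtain ⟨g, hg⟩ := hS.exists_linearMap_eq_repr b
  refine ⟨fun v => -∑ i, g v i ^ 2, ?_, by simp, fun v hv hv_ne => ?_⟩
  · have hg_smooth : ContDiff ℂ ω g := (LinearMap.toContinuousLinearMap g).contDiff
    fun_prop
  · obtain ⟨i, hi⟩ : ∃ i, b.repr ⟨v, hv⟩ i ≠ 0 := by
      by_contra! hrepr
      exact hv_ne (congrArg Subtype.val (b.forall_coord_eq_zero_iff.1 hrepr))
    have hre : (-∑ i, g v i ^ 2).re = -∑ i, b.repr ⟨v, hv⟩ i ^ 2 := by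
      simp only [hg ⟨v, hv⟩, ← ofReal_pow, ← ofReal_sum, ← ofReal_neg, ofReal_re]
    rw [hre, neg_lt_zero]
    exact Finset.sum_pos' (fun _ _ => sq_nonneg _) ⟨i, Finset.mem_univ i, by positivity⟩

end FiniteDimensional

section Peak

theorem exists_add_mul_lt_of_isCompact {X : Type*} [TopologicalSpace X] {K : Set X}
    (hK : IsCompact K) {f g : X → ℝ} {ε : ℝ} (hf : Continuous f) (hg : Continuous g)
    (hg_nonpos : ∀ x ∈ K, g x ≤ 0) (hfg : ∀ x ∈ K, g x = 0 → f x < ε) :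
    ∃ T : ℝ, ∀ x ∈ K, f x + T * g x < ε := by
  have hK' : IsCompact (K ∩ {x | ε ≤ f x}) := hK.inter_right (isClosed_le continuous_const hf)
  have hg_neg : ∀ x ∈ K ∩ {x | ε ≤ f x}, g x < 0 := fun x hx =>
    (hg_nonpos x hx.1).lt_of_ne fun h0 => (hfg x hx.1 h0).not_ge hx.2
  obtain ⟨T, hT⟩ := hK'.bddAbove_image (f := fun x => (f x - ε) / -g x)
    (by fun_prop (disch := exact fun x hx => (neg_pos.2 (hg_neg x hx)).ne'))
  refine ⟨max T 0 + 1, fun x hx => ?_⟩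
  have hT_le : T ≤ max T 0 := le_max_left T 0
  have hT_nonneg : 0 ≤ max T 0 := le_max_right T 0
  by_cases hfx : ε ≤ f x
  · have hgx := hg_neg x ⟨hx, hfx⟩
    have hTx : (f x - ε) / -g x ≤ T := hT ⟨x, ⟨hx, hfx⟩, rfl⟩
    rw [div_le_iff₀ (neg_pos.2 hgx)] at hTx
    nlinarith
  · nlinarith [hg_nonpos x hx]

variable {E : Type*} [NormedAddCommGroup E] [NormedSpace ℂ E] [NormedSpace ℝ E]
  [IsScalarTower ℝ ℂ E]

theorem exists_re_le_and_face_subset_frontier {s : Set E} (hs : Convex ℝ s) {p : E}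
    (hp : p ∈ frontier s) :
    ∃ L : E →L[ℂ] ℂ, (∀ z ∈ closure s, (L z).re ≤ (L p).re) ∧
      {z ∈ closure s | (L z).re = (L p).re} ⊆ frontier s := by
  rcases (interior s).eq_empty_or_nonempty with hs_empty | hs_ne
  · exact ⟨0, by simp, fun z hz => ⟨hz.1, by simp [hs_empty]⟩⟩
  obtain ⟨L, hL⟩ :=
    RCLike.geometric_hahn_banach_open_point (𝕜 := ℂ) hs.interior isOpen_interior hp.2
  refine ⟨L, fun z hz => ?_, fun z hz => ⟨hz.1, fun hz_int => (hL z hz_int).ne hz.2⟩⟩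
  rw [← hs.closure_interior_eq_closure_of_nonempty_interior hs_ne] at hz
  exact closure_minimal (fun x hx => (hL x hx).le)
    (isClosed_le (by fun_prop) continuous_const : IsClosed {z | (L z).re ≤ (L p).re}) hz

theorem exists_contDiff_add_re_lt [FiniteDimensional ℂ E] {C : Set E} (hC : IsCompact C)
    (hC_conv : Convex ℝ C) {p : E} (hp : p ∈ C) {L : E →L[ℂ] ℂ}
    (hL : ∀ z ∈ C, (L z).re ≤ (L p).re)
    (hdisc : ¬ ContainsAffineDisc {z ∈ C | (L z).re = (L p).re})
    {f : E → ℝ} (hf : Continuous f) {ε : ℝ} (hfp : f p < ε) :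
    ∃ h : E → ℂ, ContDiff ℂ ω h ∧ h p = 0 ∧ ∀ z ∈ C, f z + (h z).re < ε := by
  set A : Set E := {z ∈ C | (L z).re = (L p).re}
  have hA : IsCompact A := hC.inter_right (isClosed_eq (by fun_prop) continuous_const)
  have hA_conv : Convex ℝ A := hC_conv.inter
    (convex_hyperplane (reLm ∘ₗ (L : E →ₗ[ℂ] ℂ).restrictScalars ℝ).isLinear _)
  obtain ⟨Q, hQ, hQ_zero, hQ_neg⟩ :=
    (isTotallyReal_vectorSpan hA_conv hdisc).exists_contDiff_re_neg
  have hQ_cont : Continuous Q := hQ.continuous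
  have hQA : ∀ z ∈ A, z = p ∨ (Q (z - p)).re < 0 := fun z hz => or_iff_not_imp_left.2 fun hzp =>
    hQ_neg _ (vsub_mem_vectorSpan ℝ hz ⟨hp, rfl⟩) (sub_ne_zero.2 hzp)
  obtain ⟨T, hT⟩ : ∃ T : ℝ, ∀ z ∈ A, f z + T * (Q (z - p)).re < ε := by
    refine exists_add_mul_lt_of_isCompact hA hf (by fun_prop) (fun z hz => ?_) fun z hz hQz => ?_
    · rcases hQA z hz with rfl | hneg
      · simp [hQ_zero]
      · exact hneg.le
    · rcases hQA z hz with rfl | hneg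
      · exact hfp
      · exact absurd hQz hneg.ne
  obtain ⟨T', hT'⟩ : ∃ T' : ℝ, ∀ z ∈ C,
      f z + T * (Q (z - p)).re + T' * (L (z - p)).re < ε := by
    refine exists_add_mul_lt_of_isCompact hC (by fun_prop) (by fun_prop) (fun z hz => ?_)
      fun z hz hLz => hT z ⟨hz, ?_⟩
    · simpa using hL z hz
    · simpa [sub_eq_zero] using hLz
  refine ⟨fun z => T * Q (z - p) + T' * L (z - p), by fun_prop, by simp [hQ_zero], fun z hz => ?_⟩
  simpa [add_assoc] using hT' z hz

end Peak

theorem stmt1_general {n : ℕ} {Ω : Set (Fin n → ℂ)} (hΩ_bdd : Bornology.IsBounded Ω)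
    (hΩ_conv : Convex ℝ Ω) (hnodisc : ¬ ContainsAffineDisc (frontier Ω)) :
    HasPropertyP₁ (frontier Ω) := by
  have hcompact : IsCompact (closure Ω) := hΩ_bdd.isCompact_closure
  refine hasPropertyP₁_of_peak
    (hcompact.of_isClosed_subset isClosed_frontier frontier_subset_closure) fun p hp ε hε => ?_
  obtain ⟨L, hL, hface⟩ := exists_re_le_and_face_subset_frontier hΩ_conv hp
  obtain ⟨h, hh, hhp, hlt⟩ := exists_contDiff_add_re_lt hcompact hΩ_conv.closure
    (frontier_subset_closure hp) hL (fun hdisc => hnodisc (hdisc.mono hface))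
    (f := fun z => ∑ j, ‖z j - p j‖ ^ 2) (by fun_prop) (by simpa using hε)
  have hnorm_smooth : ContDiff ℝ ∞ fun z : Fin n → ℂ => ∑ j, ‖z j - p j‖ ^ 2 :=
    ContDiff.sum fun j _ => contDiff_norm_apply_sub_sq p j
  have hre_smooth : ContDiff ℝ ∞ fun z => (h z).re :=
    reCLM.contDiff.comp ((hh.restrict_scalars ℝ).of_le le_top)
  refine ⟨fun z => ∑ j, ‖z j - p j‖ ^ 2 + (h z).re, hnorm_smooth.add hre_smooth, by simp [hhp],
    fun z hz => hlt z (frontier_subset_closure hz), fun z w => ?_⟩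
  rw [leviForm_add (contDiff_infty.1 hnorm_smooth 2).contDiffAt
    (contDiff_infty.1 hre_smooth 2).contDiffAt, leviForm_sum_norm_sub_sq,
    leviForm_re (hh.of_le le_top), add_zero]

open scoped ComplexOrder in
/-- Let `Ω ⊂ ℂⁿ` be a bounded convex open set whose boundary contains no
nontrivial affine analytic disc.  Then `∂Ω` satisfies property `(P₁)`: for every `M > 0`
there exist an open neighborhood `U` of `∂Ω` and a `C^∞` function `λ : U → ℝ` with
`0 ≤ λ ≤ 1` whose complex Hessian is bounded below by `M` times the identity on `U`. -/
theorem stmt1 {n : ℕ} (Ω : Set (Fin n → ℂ))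
    (hΩ_open : IsOpen Ω) (hΩ_bdd : Bornology.IsBounded Ω) (hΩ_conv : Convex ℝ Ω)
    (hnodisc : ¬ ∃ (a b : Fin n → ℂ), b ≠ 0 ∧
      ∀ ζ : ℂ, ‖ζ‖ < 1 → a + ζ • b ∈ frontier Ω) :
    ∀ M : ℝ, 0 < M →
      ∃ U : Set (Fin n → ℂ), IsOpen U ∧ frontier Ω ⊆ U ∧
        ∃ lam : (Fin n → ℂ) → ℝ,
          ContDiffOn ℝ (⊤ : ℕ∞) (fun z => (lam z : ℂ)) U ∧
          (∀ z ∈ U, 0 ≤ lam z ∧ lam z ≤ 1) ∧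
          ∀ z ∈ U, ∀ w : Fin n → ℂ,
            ((M * ∑ j, ‖w j‖ ^ 2 : ℝ) : ℂ) ≤
              ∑ j : Fin n, ∑ k : Fin n,
                dz (dzbar (fun ζ => (lam ζ : ℂ)) k) j z * w j * (starRingEnd ℂ) (w k) :=
  stmt1_general hΩ_bdd hΩ_conv hnodisc
end
end

section
/- Let A be an n×n complex Hermitian matrix, let 1 ≤ q ≤ n, and let M ≥ 0 be a constant. Then H_q(A)(u) ≥ M·|u|² for every alternating q-array u if and only if for every orthonormal family t¹, …, t^q of vectors in ℂⁿ one has ∑_{i=1}^q Q_A(tⁱ) ≥ M. (This is the equivalence (1) ⇔ (2) of Lemma 5.) -/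
open scoped ComplexOrder Classical

/-!
For alternating `u` the sums defining `|u|²` and `H_q(A)(u)` may be taken over all multi-indices, at
the cost of the factors `q!` and `(q - 1)!`. In this shape both are values of the form of a
Kronecker product, `1 ⊗ ⋯ ⊗ 1` and `A ⊗ 1 ⊗ ⋯ ⊗ 1`.

Given orthonormal `t¹, …, t^q`, the array `u = t¹ ∧ ⋯ ∧ t^q` has norm one and
`H_q(A)(u) = ∑ Q_A(tⁱ)`. Conversely, if `A` is Hermitian and `v` denotes `u` in an orthonormal
eigenbasis with eigenvalues `l`, then by symmetry in the slots `H_q(A)(u)` is the sum of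
`(l_{j₁} + ⋯ + l_{j_q}) |v_J|²` over increasing `J`, and each bracket is `∑ Q_A` over the complex
conjugates of `q` of the eigenvectors. For general `A` the real parts of both sides only involve
`A + Aᴴ`, and multiplying `A` by `±i` controls the imaginary parts.
-/

open scoped ComplexConjugate Matrix

namespace AlternatingArray

section Permutation

variable {κ ι R : Type*}

theorem sum_comp_perm [Fintype κ] [DecidableEq κ] [Fintype ι] [AddCommMonoid R]
    (f : (κ → ι) → R) (σ : Equiv.Perm κ) : ∑ J, f (J ∘ σ) = ∑ J, f J :=
  (σ.symm.arrowCongr (Equiv.refl ι)).sum_comp f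

theorem strictMono_comp_perm_iff [LinearOrder ι] {q : ℕ} {J : Fin q → ι}
    (hJ : Function.Injective J) (σ : Equiv.Perm (Fin q)) :
    StrictMono (J ∘ σ) ↔ σ = Tuple.sort J where
  mp hσ := DFunLike.coe_injective <| hJ.comp_left <|
    Tuple.unique_monotone hσ.monotone (Tuple.monotone_sort J)
  mpr hσ := hσ ▸ (Tuple.monotone_sort J).strictMono_of_injective (hJ.comp (Equiv.injective _))

theorem sum_eq_factorial_nsmul_sum_strictMono [Fintype ι] [LinearOrder ι] [AddCommMonoid R]
    {q : ℕ} (f : (Fin q → ι) → R) (f_perm : ∀ J (σ : Equiv.Perm (Fin q)), f (J ∘ σ) = f J)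
    (f_zero : ∀ J, ¬ Function.Injective J → f J = 0) :
    ∑ J, f J = q.factorial • ∑ J with StrictMono J, f J := by
  have sum_sorting (J : Fin q → ι) :
      ∑ σ : Equiv.Perm (Fin q), (if StrictMono (J ∘ σ) then f J else 0) = f J := by
    by_cases hJ : Function.Injective J
    · simp [strictMono_comp_perm_iff hJ]
    · simp [f_zero J hJ]
  calc ∑ J, f J
      = ∑ σ : Equiv.Perm (Fin q), ∑ J, if StrictMono (J ∘ σ) then f (J ∘ σ) else 0 := by
        simp only [f_perm]
        rw [Finset.sum_comm]
        exact Finset.sum_congr rfl fun J _ => (sum_sorting J).symm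
    _ = ∑ _σ : Equiv.Perm (Fin q), ∑ J, if StrictMono J then f J else 0 :=
        Finset.sum_congr rfl fun σ _ => sum_comp_perm (fun J => if StrictMono J then f J else 0) σ
    _ = q.factorial • ∑ J with StrictMono J, f J := by
        simp [Finset.sum_filter, Fintype.card_perm]

theorem perm_ext_of_succ {m : ℕ} {σ τ : Equiv.Perm (Fin (m + 1))}
    (h : ∀ i : Fin m, σ i.succ = τ i.succ) : σ = τ := by
  refine Equiv.ext (Fin.cases ?_ h)
  obtain ⟨k, hk⟩ := τ.surjective (σ 0)
  cases k using Fin.cases with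
  | zero => exact hk.symm
  | succ j => exact absurd (σ.injective ((h j).trans hk)) (Fin.succ_ne_zero j)

theorem sum_perm_apply_zero [AddCommMonoid R] {m : ℕ} (f : Fin (m + 1) → R) :
    ∑ σ : Equiv.Perm (Fin (m + 1)), f (σ 0) = m.factorial • ∑ i, f i := by
  rw [← Equiv.Perm.decomposeFin.symm.sum_comp, Fintype.sum_prod_type]
  simp [Fintype.card_perm, Finset.smul_sum]

theorem sign_mul_self [Fintype κ] [DecidableEq κ] [Ring R] (σ : Equiv.Perm κ) :
    ((Equiv.Perm.sign σ : ℤ) : R) * ((Equiv.Perm.sign σ : ℤ) : R) = 1 := by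
  rw [← Int.cast_mul, Int.units_coe_mul_self, Int.cast_one]

end Permutation

/-- `u` is an alternating array of scalars: permuting the slots `κ` of a multi-index multiplies the
entry by the sign. Vanishing on repeated indices is a consequence in characteristic zero, see
`IsAlternating.eq_zero_of_not_injective`. -/
def IsAlternating {κ ι R : Type*} [Fintype κ] [DecidableEq κ] [Ring R] (u : (κ → ι) → R) : Prop :=
  ∀ (J : κ → ι) (σ : Equiv.Perm κ), u (J ∘ σ) = ((Equiv.Perm.sign σ : ℤ) : R) * u J

section IsAlternating

variable {κ ι : Type*} [Fintype κ] [DecidableEq κ]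

theorem IsAlternating.eq_zero_of_not_injective {R : Type*} [Ring R] [NoZeroDivisors R] [CharZero R]
    {u : (κ → ι) → R} (hu : IsAlternating u) {J : κ → ι} (hJ : ¬ Function.Injective J) :
    u J = 0 := by
  obtain ⟨a, b, hab, hne⟩ := Function.not_injective_iff.mp hJ
  have comp_swap : J ∘ Equiv.swap a b = J := by
    rw [Equiv.comp_swap_eq_update, hab, Function.update_eq_self, ← hab, Function.update_eq_self]
  have u_eq_neg := hu J (Equiv.swap a b)
  rw [comp_swap, Equiv.Perm.sign_swap hne] at u_eq_neg
  exact self_eq_neg.mp (by simpa using u_eq_neg)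

theorem IsAlternating.norm_comp_perm {𝕜 : Type*} [NormedDivisionRing 𝕜] {u : (κ → ι) → 𝕜}
    (hu : IsAlternating u) (J : κ → ι) (σ : Equiv.Perm κ) : ‖u (J ∘ σ)‖ = ‖u J‖ := by
  rcases Int.units_eq_one_or (Equiv.Perm.sign σ) with h | h <;> simp [hu J σ, h]

theorem IsAlternating.apply_cons_comp_perm {R : Type*} [Ring R] {m : ℕ}
    {u : (Fin (m + 1) → ι) → R} (hu : IsAlternating u) (j : ι) (K : Fin m → ι)
    (σ : Equiv.Perm (Fin m)) :
    u (Fin.cons j (K ∘ σ)) = ((Equiv.Perm.sign σ : ℤ) : R) * u (Fin.cons j K) := by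
  have cons_comp : (Fin.cons j (K ∘ σ) : Fin (m + 1) → ι) =
      Fin.cons j K ∘ Equiv.Perm.decomposeFin.symm (0, σ) := by
    funext i
    cases i using Fin.cases <;> simp
  rw [cons_comp, hu, Equiv.Perm.decomposeFin.symm_sign, if_pos rfl, one_mul]

theorem IsAlternating.apply_cons_eq_zero {R : Type*} [Ring R] [NoZeroDivisors R] [CharZero R]
    {m : ℕ} {u : (Fin (m + 1) → ι) → R} (hu : IsAlternating u) (j : ι) {K : Fin m → ι}
    (hK : ¬ Function.Injective K) : u (Fin.cons j K) = 0 :=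
  hu.eq_zero_of_not_injective fun h => hK (Fin.cons_injective_iff.mp h).2

end IsAlternating

section SesqForm

variable {ι 𝕜 : Type*} [Fintype ι] [RCLike 𝕜]

/-- The sesquilinear form of a matrix, linear in the first argument and with the first index of `A`
paired with it; `sesqForm A t t` is `Q_A(t)`. -/
def sesqForm (A : Matrix ι ι 𝕜) (x y : ι → 𝕜) : 𝕜 :=
  ∑ j, ∑ k, A j k * x j * conj (y k)

theorem sesqForm_add (A B : Matrix ι ι 𝕜) (x y : ι → 𝕜) :
    sesqForm (A + B) x y = sesqForm A x y + sesqForm B x y := by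
  simp only [sesqForm, Matrix.add_apply, add_mul, Finset.sum_add_distrib]

theorem sesqForm_smul (c : 𝕜) (A : Matrix ι ι 𝕜) (x y : ι → 𝕜) :
    sesqForm (c • A) x y = c * sesqForm A x y := by
  simp only [sesqForm, Matrix.smul_apply, smul_eq_mul, Finset.mul_sum, mul_assoc]

theorem sesqForm_conjTranspose (A : Matrix ι ι 𝕜) (x y : ι → 𝕜) :
    sesqForm Aᴴ x y = conj (sesqForm A y x) := by
  simp only [sesqForm, map_sum, map_mul, Matrix.conjTranspose_apply, RCLike.star_def,
    RCLike.conj_conj]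
  rw [Finset.sum_comm]
  exact Finset.sum_congr rfl fun j _ => Finset.sum_congr rfl fun k _ => mul_right_comm _ _ _

theorem sesqForm_add_conjTranspose_self (A : Matrix ι ι 𝕜) (x : ι → 𝕜) :
    sesqForm (A + Aᴴ) x x = ((2 * RCLike.re (sesqForm A x x) : ℝ) : 𝕜) := by
  rw [sesqForm_add, sesqForm_conjTranspose, RCLike.add_conj, RCLike.ofReal_mul, RCLike.ofReal_ofNat]

theorem sesqForm_smul_smul (A : Matrix ι ι 𝕜) (c d : 𝕜) (x y : ι → 𝕜) :
    sesqForm A (c • x) (d • y) = c * conj d * sesqForm A x y := by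
  simp only [sesqForm, Pi.smul_apply, smul_eq_mul, map_mul, Finset.mul_sum]
  exact Finset.sum_congr rfl fun j _ => Finset.sum_congr rfl fun k _ => by ring

theorem sesqForm_row (A W : Matrix ι ι 𝕜) (a b : ι) :
    sesqForm A (W a) (W b) = (W * A * Wᴴ) a b := by
  simp only [sesqForm, Matrix.mul_apply, Finset.sum_mul, Matrix.conjTranspose_apply,
    RCLike.star_def]
  rw [Finset.sum_comm]
  exact Finset.sum_congr rfl fun k _ => Finset.sum_congr rfl fun j _ => by ring

theorem orthonormal_iff_sesqForm_one {κ : Type*} [DecidableEq κ] [DecidableEq ι]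
    {t : κ → EuclideanSpace 𝕜 ι} :
    Orthonormal 𝕜 t ↔ ∀ i j, sesqForm 1 (t i) (t j) = if i = j then 1 else 0 := by
  have sesqForm_one_eq_inner (i j : κ) : sesqForm 1 (t i) (t j) = inner 𝕜 (t j) (t i) := by
    simp [sesqForm, Matrix.one_apply, PiLp.inner_apply]
  rw [orthonormal_iff_ite, forall_comm]
  simp only [sesqForm_one_eq_inner, eq_comm]

end SesqForm

section Wedge

variable {κ ι R : Type*} [Fintype κ] [DecidableEq κ] [CommRing R]

/-- The coordinates of the decomposable form `⋀ᵢ t i`: its entry at `J` is the minor of `t` with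
columns `J`. -/
def wedge (t : κ → ι → R) (J : κ → ι) : R :=
  (Matrix.of fun i k => t i (J k)).det

theorem isAlternating_wedge (t : κ → ι → R) : IsAlternating (wedge t) :=
  fun J σ => Matrix.det_permute' σ (Matrix.of fun i k => t i (J k))

end Wedge

section TensorForm

variable {κ ι 𝕜 : Type*} [Fintype κ] [DecidableEq κ] [Fintype ι] [RCLike 𝕜]

/-- The sesquilinear form of the Kronecker product of the matrices `B i`, on arrays that need not be
alternating. With all `B i = 1` it gives the norm of an array, and replacing one `B i` by `A` it
gives `H_q(A)`, in both cases summed over all multi-indices instead of the increasing ones. -/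
def tensorForm (B : κ → Matrix ι ι 𝕜) (u v : (κ → ι) → 𝕜) : 𝕜 :=
  ∑ I, ∑ I', u I * conj (v I') * ∏ i, B i (I i) (I' i)

theorem tensorForm_prod_prod (B : κ → Matrix ι ι 𝕜) (x y : κ → ι → 𝕜) :
    tensorForm B (fun I => ∏ i, x i (I i)) (fun I => ∏ i, y i (I i)) =
      ∏ i, sesqForm (B i) (x i) (y i) := by
  simp only [tensorForm, sesqForm, Finset.prod_univ_sum, Fintype.piFinset_univ, map_prod,
    Finset.prod_mul_distrib]
  exact Finset.sum_congr rfl fun I _ => Finset.sum_congr rfl fun I' _ => by ring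

theorem tensorForm_sum_mul_sum_mul {α β : Type*} [Fintype α] [Fintype β] (B : κ → Matrix ι ι 𝕜)
    (c : α → 𝕜) (d : β → 𝕜) (u : α → (κ → ι) → 𝕜) (v : β → (κ → ι) → 𝕜) :
    tensorForm B (fun I => ∑ a, c a * u a I) (fun I => ∑ b, d b * v b I) =
      ∑ a, ∑ b, c a * conj (d b) * tensorForm B (u a) (v b) := by
  simp only [tensorForm, map_sum, map_mul, Finset.sum_mul, Finset.mul_sum]
  simp only [Finset.sum_comm (s := (Finset.univ : Finset (κ → ι))) (t := (Finset.univ : Finset β)),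
    Finset.sum_comm (s := (Finset.univ : Finset (κ → ι))) (t := (Finset.univ : Finset α))]
  rw [Finset.sum_comm]
  exact Finset.sum_congr rfl fun a _ => Finset.sum_congr rfl fun b _ =>
    Finset.sum_congr rfl fun I _ => Finset.sum_congr rfl fun I' _ => by ring

theorem tensorForm_diagonal [DecidableEq ι] (d : κ → ι → 𝕜) (u : (κ → ι) → 𝕜) :
    tensorForm (fun i => Matrix.diagonal (d i)) u u =
      ∑ J, (∏ i, d i (J i)) * ((‖u J‖ ^ 2 : ℝ) : 𝕜) := by
  simp [tensorForm, Matrix.diagonal_apply, Fintype.prod_ite_zero, ← funext_iff, RCLike.mul_conj,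
    mul_comm]

theorem tensorForm_one [DecidableEq ι] (u : (κ → ι) → 𝕜) :
    tensorForm (fun _ => 1) u u = ((∑ J, ‖u J‖ ^ 2 : ℝ) : 𝕜) := by
  simpa using tensorForm_diagonal (fun _ _ => 1) u

theorem tensorForm_cons_one [DecidableEq ι] {m : ℕ} (A : Matrix ι ι 𝕜)
    (u : (Fin (m + 1) → ι) → 𝕜) :
    tensorForm (Fin.cons A fun _ => 1) u u =
      ∑ K : Fin m → ι, sesqForm A (fun j => u (Fin.cons j K)) (fun k => u (Fin.cons k K)) := by
  have sum_cons (f : (Fin (m + 1) → ι) → 𝕜) :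
      ∑ J, f J = ∑ j, ∑ K : Fin m → ι, f (Fin.cons j K) := by
    rw [← Fintype.sum_prod_type', ← (Fin.consEquiv fun _ => ι).sum_comp]
    rfl
  simp only [tensorForm, sesqForm, sum_cons, Fin.prod_univ_succ, Fin.cons_zero, Fin.cons_succ,
    Matrix.one_apply, Fintype.prod_boole, ← funext_iff, mul_ite, mul_one, mul_zero,
    Finset.sum_ite_eq, Finset.mem_univ, if_true]
  rw [Finset.sum_comm]
  exact Finset.sum_congr rfl fun K _ => Finset.sum_congr rfl fun j _ =>
    Finset.sum_congr rfl fun k _ => by ring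

/-- The action of the tensor power of `Wᵀ` on arrays: the coordinates of `u` after the change of
basis given by the columns of `W`. -/
def changeBasis (W : Matrix ι ι 𝕜) (u : (κ → ι) → 𝕜) (J : κ → ι) : 𝕜 :=
  ∑ I, u I * ∏ i, W (I i) (J i)

theorem tensorForm_changeBasis (W : Matrix ι ι 𝕜) (B : κ → Matrix ι ι 𝕜) (u v : (κ → ι) → 𝕜) :
    tensorForm B (changeBasis W u) (changeBasis W v) =
      tensorForm (fun i => W * B i * Wᴴ) u v := by
  refine (tensorForm_sum_mul_sum_mul B u v (fun I J => ∏ i, W (I i) (J i)) _).trans ?_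
  refine Finset.sum_congr rfl fun I _ => Finset.sum_congr rfl fun I' _ => ?_
  rw [tensorForm_prod_prod B (fun i => W (I i)) (fun i => W (I' i))]
  simp only [sesqForm_row]

theorem isAlternating_changeBasis (W : Matrix ι ι 𝕜) {u : (κ → ι) → 𝕜} (hu : IsAlternating u) :
    IsAlternating (changeBasis W u) := by
  intro J σ
  calc ∑ I, u I * ∏ i, W (I i) (J (σ i))
      = ∑ I, u (I ∘ σ) * ∏ i, W (I (σ i)) (J (σ i)) :=
        (sum_comp_perm (fun I => u I * ∏ i, W (I i) (J (σ i))) σ).symm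
    _ = ∑ I, ((Equiv.Perm.sign σ : ℤ) : 𝕜) * (u I * ∏ i, W (I i) (J i)) := by
        refine Finset.sum_congr rfl fun I _ => ?_
        rw [hu I σ, mul_assoc, Equiv.prod_comp σ fun i => W (I i) (J i)]
    _ = ((Equiv.Perm.sign σ : ℤ) : 𝕜) * ∑ I, u I * ∏ i, W (I i) (J i) := (Finset.mul_sum ..).symm

theorem tensorForm_wedge (B : κ → Matrix ι ι 𝕜) (t : κ → ι → 𝕜) :
    tensorForm B (wedge t) (wedge t) =
      ∑ σ : Equiv.Perm κ, ∑ τ : Equiv.Perm κ,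
        ((Equiv.Perm.sign σ : ℤ) : 𝕜) * ((Equiv.Perm.sign τ : ℤ) : 𝕜) *
          ∏ k, sesqForm (B k) (t (σ k)) (t (τ k)) := by
  have wedge_eq : wedge t = fun J => ∑ σ : Equiv.Perm κ,
      ((Equiv.Perm.sign σ : ℤ) : 𝕜) * ∏ k, t (σ k) (J k) := by
    funext J
    exact Matrix.det_apply' _
  rw [wedge_eq, tensorForm_sum_mul_sum_mul]
  refine Finset.sum_congr rfl fun σ _ => Finset.sum_congr rfl fun τ _ => ?_
  rw [map_intCast, tensorForm_prod_prod B (fun k => t (σ k)) (fun k => t (τ k))]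

end TensorForm

section InducedForm

variable {ι 𝕜 : Type*} [Fintype ι] [LinearOrder ι] [RCLike 𝕜] {m q : ℕ}

/-- The squared norm `|u|²` of an alternating array. -/
def sqNorm (u : (Fin q → ι) → 𝕜) : ℝ :=
  ∑ J with StrictMono J, ‖u J‖ ^ 2

/-- The form `H_q(A)` on alternating arrays, for `q = m + 1`. -/
def inducedForm (A : Matrix ι ι 𝕜) (u : (Fin (m + 1) → ι) → 𝕜) : 𝕜 :=
  ∑ K with StrictMono K, sesqForm A (fun j => u (Fin.cons j K)) (fun k => u (Fin.cons k K))

theorem inducedForm_smul (c : 𝕜) (A : Matrix ι ι 𝕜) (u : (Fin (m + 1) → ι) → 𝕜) :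
    inducedForm (c • A) u = c * inducedForm A u := by
  simp only [inducedForm, sesqForm_smul, Finset.mul_sum]

theorem IsAlternating.sum_norm_sq {u : (Fin q → ι) → 𝕜} (hu : IsAlternating u) :
    ∑ J, ‖u J‖ ^ 2 = q.factorial * sqNorm u := by
  rw [sqNorm, ← nsmul_eq_mul]
  refine sum_eq_factorial_nsmul_sum_strictMono _ (fun J σ => ?_) (fun J hJ => ?_)
  · rw [hu.norm_comp_perm]
  · simp [hu.eq_zero_of_not_injective hJ]

theorem IsAlternating.tensorForm_cons_one_eq_inducedForm (A : Matrix ι ι 𝕜)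
    {u : (Fin (m + 1) → ι) → 𝕜} (hu : IsAlternating u) :
    tensorForm (Fin.cons A fun _ => 1) u u = m.factorial * inducedForm A u := by
  rw [tensorForm_cons_one, inducedForm, ← nsmul_eq_mul]
  refine sum_eq_factorial_nsmul_sum_strictMono _ (fun K σ => ?_) (fun K hK => ?_)
  · have slice_comp : (fun j => u (Fin.cons j (K ∘ σ))) =
        ((Equiv.Perm.sign σ : ℤ) : 𝕜) • fun j => u (Fin.cons j K) :=
      funext fun j => hu.apply_cons_comp_perm j K σ
    rw [slice_comp, sesqForm_smul_smul, map_intCast, sign_mul_self, one_mul]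
  · simp [sesqForm, hu.apply_cons_eq_zero _ hK]

theorem sqNorm_wedge {t : Fin q → EuclideanSpace 𝕜 ι} (ht : Orthonormal 𝕜 t) :
    sqNorm (wedge fun i => t i) = 1 := by
  have norm_eq := tensorForm_one (wedge fun i => t i)
  rw [tensorForm_wedge, (isAlternating_wedge _).sum_norm_sq] at norm_eq
  simp only [orthonormal_iff_sesqForm_one.mp ht, Fintype.prod_boole, ← Equiv.ext_iff, mul_ite,
    mul_one, mul_zero, Finset.sum_ite_eq, Finset.mem_univ, if_true, sign_mul_self] at norm_eq
  have factorial_eq : (q.factorial : ℝ) = q.factorial * sqNorm (wedge fun i => t i) := by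
    simpa [Fintype.card_perm] using congrArg RCLike.re norm_eq
  exact (mul_eq_left₀ (by positivity)).mp factorial_eq.symm

theorem inducedForm_wedge (A : Matrix ι ι 𝕜) {t : Fin (m + 1) → EuclideanSpace 𝕜 ι}
    (ht : Orthonormal 𝕜 t) :
    inducedForm A (wedge fun i => t i) = ∑ i, sesqForm A (t i) (t i) := by
  have agree_iff (σ τ : Equiv.Perm (Fin (m + 1))) :
      (∀ i : Fin m, σ i.succ = τ i.succ) ↔ σ = τ :=
    ⟨perm_ext_of_succ, fun h i => h ▸ rfl⟩
  have form_eq := (isAlternating_wedge fun i => (t i : ι → 𝕜)).tensorForm_cons_one_eq_inducedForm A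
  rw [tensorForm_wedge] at form_eq
  simp only [Fin.prod_univ_succ, Fin.cons_zero, Fin.cons_succ,
    orthonormal_iff_sesqForm_one.mp ht, Fintype.prod_boole, agree_iff, mul_ite, mul_one, mul_zero,
    Finset.sum_ite_eq, Finset.mem_univ, if_true, sign_mul_self, one_mul,
    sum_perm_apply_zero fun i => sesqForm A (t i) (t i), nsmul_eq_mul] at form_eq
  exact (mul_left_cancel₀ (Nat.cast_ne_zero.mpr m.factorial_ne_zero) form_eq).symm

end InducedForm

section LowerBound

variable {ι 𝕜 : Type*} [Fintype ι] [RCLike 𝕜] {m : ℕ} {M : ℝ}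

theorem IsAlternating.sum_apply_mul_norm_sq {v : (Fin (m + 1) → ι) → 𝕜} (hv : IsAlternating v)
    (l : ι → ℝ) (i : Fin (m + 1)) :
    ∑ J, l (J i) * ‖v J‖ ^ 2 = ∑ J, l (J 0) * ‖v J‖ ^ 2 := by
  rw [← sum_comp_perm _ (Equiv.swap 0 i)]
  simp [hv.norm_comp_perm]

theorem IsAlternating.mul_sum_norm_sq_le {v : (Fin (m + 1) → ι) → 𝕜} (hv : IsAlternating v)
    {l : ι → ℝ} (hl : ∀ J : Fin (m + 1) → ι, Function.Injective J → M ≤ ∑ i, l (J i)) :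
    M * ∑ J, ‖v J‖ ^ 2 ≤ (m + 1) * ∑ J, l (J 0) * ‖v J‖ ^ 2 :=
  calc M * ∑ J, ‖v J‖ ^ 2
      = ∑ J, M * ‖v J‖ ^ 2 := Finset.mul_sum ..
    _ ≤ ∑ J, (∑ i, l (J i)) * ‖v J‖ ^ 2 := by
        refine Finset.sum_le_sum fun J _ => ?_
        by_cases hJ : Function.Injective J
        · exact mul_le_mul_of_nonneg_right (hl J hJ) (by positivity)
        · simp [hv.eq_zero_of_not_injective hJ]
    _ = ∑ i, ∑ J, l (J i) * ‖v J‖ ^ 2 := by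
        simp only [Finset.sum_mul]
        exact Finset.sum_comm
    _ = (m + 1) * ∑ J, l (J 0) * ‖v J‖ ^ 2 := by
        simp [hv.sum_apply_mul_norm_sq l]

variable [LinearOrder ι] {u : (Fin (m + 1) → ι) → 𝕜}

theorem IsAlternating.sum_norm_sq_changeBasis {q : ℕ} {u : (Fin q → ι) → 𝕜} (hu : IsAlternating u)
    {W : Matrix ι ι 𝕜} (hW : W * Wᴴ = 1) :
    ∑ J, ‖changeBasis W u J‖ ^ 2 = q.factorial * sqNorm u := by
  have norm_eq := tensorForm_changeBasis W (fun _ => 1) u u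
  simp only [mul_one, hW, tensorForm_one] at norm_eq
  rw [← hu.sum_norm_sq, RCLike.ofReal_inj.mp norm_eq]

theorem IsAlternating.sum_mul_norm_sq_changeBasis (hu : IsAlternating u) {W : Matrix ι ι 𝕜}
    (hW : W * Wᴴ = 1) (l : ι → ℝ) :
    ((∑ J, l (J 0) * ‖changeBasis W u J‖ ^ 2 : ℝ) : 𝕜) =
      m.factorial * inducedForm (W * Matrix.diagonal (fun j => (l j : 𝕜)) * Wᴴ) u := by
  have slots_eq : (fun i => W * Matrix.diagonal
      ((Fin.cons (fun j => (l j : 𝕜)) fun _ _ => 1 : Fin (m + 1) → ι → 𝕜) i) * Wᴴ) =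
      Fin.cons (W * Matrix.diagonal (fun j => (l j : 𝕜)) * Wᴴ) fun _ => 1 := by
    funext i
    cases i using Fin.cases <;> simp [hW]
  rw [← hu.tensorForm_cons_one_eq_inducedForm, ← slots_eq, ← tensorForm_changeBasis,
    tensorForm_diagonal]
  simp [Fin.prod_univ_succ]

theorem IsAlternating.mul_sqNorm_le_re_inducedForm_of_isHermitian (hu : IsAlternating u)
    {A : Matrix ι ι 𝕜} (hA : A.IsHermitian)
    (h : ∀ t : Fin (m + 1) → EuclideanSpace 𝕜 ι, Orthonormal 𝕜 t →
      M ≤ RCLike.re (∑ i, sesqForm A (t i) (t i))) :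
    M * sqNorm u ≤ RCLike.re (inducedForm A u) := by
  obtain ⟨W, l, hW, hW', rfl⟩ : ∃ (W : Matrix ι ι 𝕜) (l : ι → ℝ), W * Wᴴ = 1 ∧ Wᴴ * W = 1 ∧
      A = W * Matrix.diagonal (fun j => (l j : 𝕜)) * Wᴴ :=
    ⟨hA.eigenvectorUnitary, hA.eigenvalues, Unitary.coe_mul_star_self _,
      Unitary.coe_star_mul_self _, hA.spectral_theorem⟩
  have sesqForm_eigen (B : Matrix ι ι 𝕜) (a b : ι) :
      sesqForm (W * B * Wᴴ) (Wᴴ a) (Wᴴ b) = B a b := by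
    rw [sesqForm_row, Matrix.conjTranspose_conjTranspose, ← mul_assoc, ← mul_assoc, hW', one_mul,
      mul_assoc, hW', mul_one]
  have le_sum_eigenvalues (J : Fin (m + 1) → ι) (hJ : Function.Injective J) :
      M ≤ ∑ i, l (J i) := by
    have ht : Orthonormal 𝕜 fun i => WithLp.toLp 2 (Wᴴ (J i)) := by
      refine orthonormal_iff_sesqForm_one.mpr fun i j => ?_
      simpa [hW, Matrix.one_apply, hJ.eq_iff] using sesqForm_eigen 1 (J i) (J j)
    simpa [sesqForm_eigen] using h _ ht
  have bound := (isAlternating_changeBasis W hu).mul_sum_norm_sq_le le_sum_eigenvalues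
  have form_eq := congrArg RCLike.re (hu.sum_mul_norm_sq_changeBasis hW l)
  rw [RCLike.ofReal_re, ← nsmul_eq_mul, map_nsmul, nsmul_eq_mul] at form_eq
  rw [hu.sum_norm_sq_changeBasis hW, form_eq, Nat.factorial_succ, Nat.cast_mul] at bound
  refine le_of_mul_le_mul_left ?_ (by positivity : (0 : ℝ) < (m + 1) * m.factorial)
  push_cast at bound
  linarith

theorem IsAlternating.mul_sqNorm_le_re_inducedForm (hu : IsAlternating u) {A : Matrix ι ι 𝕜}
    (h : ∀ t : Fin (m + 1) → EuclideanSpace 𝕜 ι, Orthonormal 𝕜 t →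
      M ≤ RCLike.re (∑ i, sesqForm A (t i) (t i))) :
    M * sqNorm u ≤ RCLike.re (inducedForm A u) := by
  have bound := hu.mul_sqNorm_le_re_inducedForm_of_isHermitian (M := 2 * M)
    (A.isHermitian_add_transpose_self) fun t ht => by
      simpa [sesqForm_add_conjTranspose_self, ← Finset.mul_sum] using h t ht
  simp only [inducedForm, sesqForm_add_conjTranspose_self, ← RCLike.ofReal_sum, RCLike.ofReal_re,
    ← Finset.mul_sum, ← map_sum] at bound ⊢
  linarith

theorem IsAlternating.ofReal_mul_sqNorm_le_inducedForm (hu : IsAlternating u) {A : Matrix ι ι 𝕜}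
    (h : ∀ t : Fin (m + 1) → EuclideanSpace 𝕜 ι, Orthonormal 𝕜 t →
      (M : 𝕜) ≤ ∑ i, sesqForm A (t i) (t i)) :
    ((M * sqNorm u : ℝ) : 𝕜) ≤ inducedForm A u := by
  have re_bound (t : Fin (m + 1) → EuclideanSpace 𝕜 ι) (ht : Orthonormal 𝕜 t) :
      M ≤ RCLike.re (∑ i, sesqForm A (t i) (t i)) := by
    simpa using (RCLike.le_iff_re_im.mp (h t ht)).1
  have im_zero (t : Fin (m + 1) → EuclideanSpace 𝕜 ι) (ht : Orthonormal 𝕜 t) :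
      RCLike.im (∑ i, sesqForm A (t i) (t i)) = 0 := by
    simpa using (RCLike.le_iff_re_im.mp (h t ht)).2.symm
  have re_mul_nonneg (c : 𝕜) (hc : RCLike.re c = 0) : 0 ≤ RCLike.re (c * inducedForm A u) := by
    rw [← inducedForm_smul, ← zero_mul (sqNorm u)]
    refine hu.mul_sqNorm_le_re_inducedForm fun t ht => ?_
    simp only [sesqForm_smul, ← Finset.mul_sum, RCLike.mul_re, hc, im_zero t ht, zero_mul,
      mul_zero, sub_zero, le_refl]
  have im_nonpos : 0 ≤ -RCLike.im (inducedForm A u) := by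
    simpa only [RCLike.I_mul_re] using re_mul_nonneg RCLike.I RCLike.I_re
  have im_nonneg : 0 ≤ RCLike.im (inducedForm A u) := by
    simpa only [neg_mul, map_neg, RCLike.I_mul_re, neg_neg] using
      re_mul_nonneg (-RCLike.I) (by rw [map_neg, RCLike.I_re, neg_zero])
  rw [RCLike.le_iff_re_im, RCLike.ofReal_re, RCLike.ofReal_im]
  exact ⟨hu.mul_sqNorm_le_re_inducedForm re_bound, by linarith⟩

end LowerBound

end AlternatingArray

open AlternatingArray

theorem stmt7_general {ι 𝕜 : Type*} [Fintype ι] [LinearOrder ι] [RCLike 𝕜] {m : ℕ}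
    (A : Matrix ι ι 𝕜) (M : ℝ) :
    (∀ u : (Fin (m + 1) → ι) → 𝕜, IsAlternating u → ((M * sqNorm u : ℝ) : 𝕜) ≤ inducedForm A u) ↔
      ∀ t : Fin (m + 1) → EuclideanSpace 𝕜 ι, Orthonormal 𝕜 t →
        (M : 𝕜) ≤ ∑ i, sesqForm A (t i) (t i) := by
  constructor
  · intro h t ht
    simpa [sqNorm_wedge ht, inducedForm_wedge A ht] using h _ (isAlternating_wedge fun i => t i)
  · exact fun h u hu => hu.ofReal_mul_sqNorm_le_inducedForm h

/-- Let `A` be an `n × n` complex Hermitian matrix, `1 ≤ q ≤ n`, `M ≥ 0`.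
Then `H_q(A)(u) ≥ M |u|²` for every alternating `q`-array `u` if and only if for every
orthonormal family `t¹, …, t^q` in `ℂⁿ` one has `∑_{i=1}^q Q_A(tⁱ) ≥ M`. -/
theorem stmt7 {n q : ℕ} (hq : 1 ≤ q) (hqn : q ≤ n)
    (A : Matrix (Fin n) (Fin n) ℂ) (hA : A.IsHermitian) (M : ℝ) (hM : 0 ≤ M) :
    (∀ u : (Fin q → Fin n) → ℂ,
        (∀ (J : Fin q → Fin n) (σ : Equiv.Perm (Fin q)),
            u (J ∘ σ) = ((Equiv.Perm.sign σ : ℤ) : ℂ) * u J) →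
        ((M * ∑ J ∈ Finset.univ.filter (fun J : Fin q → Fin n => StrictMono J), ‖u J‖ ^ 2 : ℝ) : ℂ)
          ≤ ∑ K ∈ Finset.univ.filter (fun K : Fin (q - 1) → Fin n => StrictMono K),
              ∑ j : Fin n, ∑ k : Fin n,
                A j k * u (fun i => (Fin.cons j K : Fin (q - 1 + 1) → Fin n) (Fin.cast (Nat.succ_pred_eq_of_pos hq).symm i))
                  * (starRingEnd ℂ)
                      (u (fun i => (Fin.cons k K : Fin (q - 1 + 1) → Fin n) (Fin.cast (Nat.succ_pred_eq_of_pos hq).symm i))))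
    ↔ (∀ t : Fin q → EuclideanSpace ℂ (Fin n), Orthonormal ℂ t →
        (M : ℂ) ≤ ∑ i : Fin q, ∑ j : Fin n, ∑ k : Fin n,
          A j k * t i j * (starRingEnd ℂ) (t i k)) := by
  obtain ⟨m, rfl⟩ := Nat.exists_eq_add_of_le' hq
  exact stmt7_general A M
end
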